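/- Let q be an odd prime power with 3 a nonzero square in F_q, and n a positive integer. If A ⊆ (F_q^n)² avoids all triples x, x + d, x + M₂d with d ≠ 0, where M₂ = [[b, −ab],[ab, b]], a² = 3, b = 2⁻¹, then |A| ≤ 3·c_q^{2n} with c_q = inf_{0<x<1} (1 − x^q)/(x^{(q−1)/3}(1 − x)). -/

import Mathlib

lemma rank_add_le_aux {F B : Type*} [Field F] [Fintype B] [DecidableEq B] (M N : Matrix B B F) :
    (M + N).rank ≤ M.rank + N.rank := by
  unfold Matrix.rank
  rw [Matrix.mulVecLin_add]
  refine le_trans (Submodule.finrank_mono ?_) (Submodule.finrank_add_le_finrank_add_finrank _ _)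
  rintro _ ⟨v, rfl⟩
  exact Submodule.add_mem_sup ⟨v, rfl⟩ ⟨v, rfl⟩

/-- A subspace of `B → F` contains a vector with support at least its dimension. -/
lemma exists_large_support {F B : Type*} [Field F] [Fintype B] [DecidableEq B] [DecidableEq F]
    (W : Submodule F (B → F)) :
    ∃ v ∈ W, Module.finrank F W ≤ (Finset.univ.filter fun x => v x ≠ 0).card := by
  classical
  by_contra! hcon
  have key : ∀ k : ℕ, ∃ v ∈ W, k ≤ (Finset.univ.filter fun x => v x ≠ 0).card := by
    intro k
    induction k with
    | zero => exact ⟨0, W.zero_mem, Nat.zero_le _⟩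
    | succ k ih =>
      obtain ⟨v, hv, hk⟩ := ih
      have hlt := hcon v hv
      set S := Finset.univ.filter fun x => v x ≠ 0 with hS
      let φ : W →ₗ[F] (S → F) :=
        (LinearMap.funLeft F F (fun s : S => (s : B))).comp W.subtype
      have hker : LinearMap.ker φ ≠ ⊥ := by
        apply LinearMap.ker_ne_bot_of_finrank_lt
        simpa using hlt
      obtain ⟨w, hw, hw0⟩ := Submodule.exists_mem_ne_zero_of_ne_bot hker
      have hwS : ∀ x ∈ S, (w : B → F) x = 0 := by
        intro x hx
        have := congrFun (LinearMap.mem_ker.mp hw) ⟨x, hx⟩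
        simpa [φ, LinearMap.funLeft] using this
      have hw1 : (w : B → F) ≠ 0 := fun h => hw0 (Subtype.ext h)
      obtain ⟨x₀, hx₀⟩ := Function.ne_iff.mp hw1
      have hx₀S : x₀ ∉ S := fun h => hx₀ (hwS x₀ h)
      refine ⟨v + w, W.add_mem hv w.2, ?_⟩
      have hsub : insert x₀ S ⊆ Finset.univ.filter fun x => (v + (w : B → F)) x ≠ 0 := by
        intro x hx
        rw [Finset.mem_insert] at hx
        rcases hx with rfl | hx
        · have : v x = 0 := by simpa [hS] using hx₀S
          simpa [this] using hx₀
        · have h1 := hwS x hx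
          have h2 : v x ≠ 0 := by simpa [hS] using hx
          simpa [h1] using h2
      calc k + 1 ≤ S.card + 1 := by omega
        _ = (insert x₀ S).card := (Finset.card_insert_of_notMem hx₀S).symm
        _ ≤ _ := Finset.card_le_card hsub
  obtain ⟨v, hv, hk⟩ := key (Module.finrank F W)
  exact absurd (hcon v hv) (not_lt.mpr hk)

/-- Slice rank of the diagonal tensor. -/
lemma slice_rank_diag {F B J : Type*} [Field F] [Fintype B] [DecidableEq B] (I : Finset J)
    (f₁ f₂ f₃ : J → B → F) (g₁ g₂ g₃ : J → B → B → F)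
    (h : ∀ x y z : B, (if x = y ∧ y = z then (1 : F) else 0) =
      ∑ α ∈ I, f₁ α x * g₁ α y z + ∑ α ∈ I, f₂ α y * g₂ α x z + ∑ α ∈ I, f₃ α z * g₃ α x y) :
    Fintype.card B ≤ 3 * I.card := by
  classical
  let φ : (B → F) →ₗ[F] (I → F) := Matrix.mulVecLin (Matrix.of fun (α : I) z => f₃ α z)
  obtain ⟨v, hv, hvs⟩ := exists_large_support (LinearMap.ker φ)
  have hdim : Fintype.card B ≤ I.card + Module.finrank F (LinearMap.ker φ) := by
    have h1 := LinearMap.finrank_range_add_finrank_ker φ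
    have h2 : Module.finrank F (LinearMap.range φ) ≤ I.card := by
      refine (Submodule.finrank_le _).trans ?_
      simp
    simp only [Module.finrank_fintype_fun_eq_card] at h1
    omega
  have horth : ∀ α ∈ I, ∑ z, f₃ α z * v z = 0 := by
    intro α hα
    have := congrFun (LinearMap.mem_ker.mp hv) ⟨α, hα⟩
    simpa [φ, Matrix.mulVec, dotProduct] using this
  have hmat : Matrix.diagonal v =
      (Matrix.of fun x (α : I) => f₁ α x) * (Matrix.of fun (α : I) y => ∑ z, g₁ α y z * v z) +
      (Matrix.of fun x (α : I) => ∑ z, g₂ α x z * v z) * (Matrix.of fun (α : I) y => f₂ α y) := by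
    ext x y
    have h1 : Matrix.diagonal v x y
        = ∑ z, (if x = y ∧ y = z then (1 : F) else 0) * v z := by
      by_cases hxy : x = y
      · subst hxy; simp
      · simp [hxy]
    rw [h1]
    simp only [h, add_mul, Finset.sum_add_distrib, Matrix.add_apply, Matrix.mul_apply,
      Matrix.of_apply]
    have h3 : ∑ z, (∑ α ∈ I, f₃ α z * g₃ α x y) * v z = 0 := by
      simp only [Finset.sum_mul]
      rw [Finset.sum_comm]
      refine Finset.sum_eq_zero fun α hα => ?_
      have := horth α hα
      calc ∑ z, f₃ α z * g₃ α x y * v z = (∑ z, f₃ α z * v z) * g₃ α x y := by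
            rw [Finset.sum_mul]; exact Finset.sum_congr rfl fun _ _ => by ring
        _ = 0 := by rw [this, zero_mul]
    rw [h3, add_zero]
    congr 1
    · simp only [Finset.sum_mul, Finset.mul_sum]
      rw [Finset.sum_comm, ← Finset.sum_coe_sort I]
      exact Finset.sum_congr rfl fun _ _ => Finset.sum_congr rfl fun _ _ => by ring
    · simp only [Finset.sum_mul]
      rw [Finset.sum_comm, ← Finset.sum_coe_sort I]
      exact Finset.sum_congr rfl fun _ _ => Finset.sum_congr rfl fun _ _ => by ring
  have hrank : (Matrix.diagonal v).rank ≤ I.card + I.card := by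
    rw [hmat]
    refine (rank_add_le_aux _ _).trans (add_le_add ?_ ?_)
    · refine (Matrix.rank_mul_le_left _ _).trans ((Matrix.rank_le_card_width _).trans ?_)
      simp
    · refine (Matrix.rank_mul_le_left _ _).trans ((Matrix.rank_le_card_width _).trans ?_)
      simp
  rw [Matrix.rank_diagonal, Fintype.card_subtype] at hrank
  omega

/-- The set of exponents of low degree. -/
def lowDeg (ι : Type*) [Fintype ι] [DecidableEq ι] (m : ℕ) : Finset (ι → ℕ) :=
  (Fintype.piFinset fun _ => Finset.range (m + 1)).filter
    fun α => 3 * ∑ i, α i ≤ m * Fintype.card ι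

lemma sum_group {F K J : Type*} [Field F] [DecidableEq J] (P : Finset K) (I : Finset J)
    (r : K → J) (hr : ∀ s ∈ P, r s ∈ I) (f : J → F) (g : K → F) :
    ∑ s ∈ P, f (r s) * g s = ∑ α ∈ I, f α * ∑ s ∈ P with r s = α, g s := by
  rw [← Finset.sum_fiberwise_of_maps_to hr]
  refine Finset.sum_congr rfl fun α _ => ?_
  rw [Finset.mul_sum]
  refine Finset.sum_congr rfl fun s hs => ?_
  rw [(Finset.mem_filter.mp hs).2]

lemma card_bound {F B ι : Type*} [Field F] [Fintype F] [Fintype B] [DecidableEq B]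
    [Fintype ι] [DecidableEq ι] (X Y Z : B → ι → F)
    (h : ∀ x y z, (∀ i, X x i + Y y i + Z z i = 0) ↔ (x = y ∧ y = z)) :
    Fintype.card B ≤ 3 * (lowDeg ι (Fintype.card F - 1)).card := by
  classical
  set m := Fintype.card F - 1 with hm
  have hm0 : m ≠ 0 := by have := Fintype.one_lt_card (α := F); omega
  let p : MvPolynomial (Fin 3) F := 1 - (MvPolynomial.X 0 + MvPolynomial.X 1 + MvPolynomial.X 2) ^ m
  have hdeg : p.totalDegree ≤ m := by
    refine (MvPolynomial.totalDegree_sub _ _).trans (max_le (by simp) ?_)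
    refine (MvPolynomial.totalDegree_pow _ _).trans ?_
    have : (MvPolynomial.X 0 + MvPolynomial.X 1 + MvPolynomial.X 2 :
        MvPolynomial (Fin 3) F).totalDegree ≤ 1 := by
      refine (MvPolynomial.totalDegree_add _ _).trans (max_le ?_ (by simp))
      exact (MvPolynomial.totalDegree_add _ _).trans (max_le (by simp) (by simp))
    nlinarith
  have hexp : ∀ u v w : F, 1 - (u + v + w) ^ m =
      ∑ d ∈ p.support, p.coeff d * (u ^ d 0 * v ^ d 1 * w ^ d 2) := by
    intro u v w
    have := MvPolynomial.eval_eq' ![u, v, w] p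
    simpa [p, Fin.prod_univ_three] using this
  have hd : ∀ d ∈ p.support, d 0 + d 1 + d 2 ≤ m := by
    intro d hd
    have := (MvPolynomial.le_totalDegree hd).trans hdeg
    rwa [Finsupp.sum_fintype _ _ (by simp), Fin.sum_univ_three] at this
  let Q : Finset (ι → (Fin 3 →₀ ℕ)) := Fintype.piFinset fun _ => p.support
  let r : Fin 3 → (ι → (Fin 3 →₀ ℕ)) → (ι → ℕ) := fun k s i => s i k
  let c : (ι → (Fin 3 →₀ ℕ)) → F := fun s => ∏ i, p.coeff (s i)
  let mon : (ι → ℕ) → (ι → F) → F := fun α u => ∏ i, u i ^ α i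
  have hT : ∀ x y z, (if x = y ∧ y = z then (1 : F) else 0) =
      ∑ s ∈ Q, c s * (mon (r 0 s) (X x) * mon (r 1 s) (Y y) * mon (r 2 s) (Z z)) := by
    intro x y z
    have h1 : (if x = y ∧ y = z then (1 : F) else 0)
        = ∏ i, (1 - (X x i + Y y i + Z z i) ^ m) := by
      split_ifs with hc
      · have := (h x y z).mpr hc
        symm
        refine Finset.prod_eq_one fun i _ => ?_
        rw [this i, zero_pow hm0, sub_zero]
      · rw [← h] at hc
        push Not at hc
        obtain ⟨i, hi⟩ := hc
        symm
        refine Finset.prod_eq_zero (Finset.mem_univ i) ?_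
        rw [hm, FiniteField.pow_card_sub_one_eq_one _ hi, sub_self]
    rw [h1]
    simp only [hexp]
    rw [Finset.prod_univ_sum]
    refine Finset.sum_congr rfl fun s _ => ?_
    simp only [c, mon, r, Finset.prod_mul_distrib]
  let P : Fin 3 → (ι → (Fin 3 →₀ ℕ)) → Prop := fun k s => 3 * ∑ i, r k s i ≤ m * Fintype.card ι
  have hP : ∀ s ∈ Q, P 0 s ∨ P 1 s ∨ P 2 s := by
    intro s hs
    by_contra! hcon
    simp only [P, r, not_le] at hcon
    have : ∑ i, (s i 0 + s i 1 + s i 2) ≤ ∑ _i : ι, m :=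
      Finset.sum_le_sum fun i _ => hd _ (Fintype.mem_piFinset.mp hs i)
    simp only [Finset.sum_add_distrib, Finset.sum_const, Finset.card_univ, smul_eq_mul] at this
    nlinarith [hcon.1, hcon.2.1, hcon.2.2]
  have hlow : ∀ k, ∀ s ∈ Q, P k s → r k s ∈ lowDeg ι m := by
    intro k s hs hPs
    refine Finset.mem_filter.mpr ⟨Fintype.mem_piFinset.mpr fun i => ?_, hPs⟩
    have := hd _ (Fintype.mem_piFinset.mp hs i)
    rw [Finset.mem_range]
    fin_cases k <;> simp [r] <;> omega
  let Q₁ := Q.filter (P 0)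
  let Q₂ := (Q.filter fun s => ¬ P 0 s).filter (P 1)
  let Q₃ := (Q.filter fun s => ¬ P 0 s).filter fun s => ¬ P 1 s
  have hQ₁ : ∀ s ∈ Q₁, r 0 s ∈ lowDeg ι m := fun s hs => by
    simp only [Q₁, Finset.mem_filter] at hs
    exact hlow 0 s hs.1 hs.2
  have hQ₂ : ∀ s ∈ Q₂, r 1 s ∈ lowDeg ι m := fun s hs => by
    simp only [Q₂, Finset.mem_filter] at hs
    exact hlow 1 s hs.1.1 hs.2
  have hQ₃ : ∀ s ∈ Q₃, r 2 s ∈ lowDeg ι m := fun s hs => by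
    simp only [Q₃, Finset.mem_filter] at hs
    have := hP s hs.1.1
    exact hlow 2 s hs.1.1 (by tauto)
  refine slice_rank_diag (lowDeg ι m) (fun α x => mon α (X x)) (fun α y => mon α (Y y))
    (fun α z => mon α (Z z))
    (fun α y z => ∑ s ∈ Q₁ with r 0 s = α, c s * (mon (r 1 s) (Y y) * mon (r 2 s) (Z z)))
    (fun α x z => ∑ s ∈ Q₂ with r 1 s = α, c s * (mon (r 0 s) (X x) * mon (r 2 s) (Z z)))
    (fun α x y => ∑ s ∈ Q₃ with r 2 s = α, c s * (mon (r 0 s) (X x) * mon (r 1 s) (Y y))) ?_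
  intro x y z
  rw [hT, ← sum_group Q₁ _ (r 0) hQ₁ (fun α => mon α (X x)),
    ← sum_group Q₂ _ (r 1) hQ₂ (fun α => mon α (Y y)),
    ← sum_group Q₃ _ (r 2) hQ₃ (fun α => mon α (Z z)),
    ← Finset.sum_filter_add_sum_filter_not Q (P 0),
    ← Finset.sum_filter_add_sum_filter_not (Q.filter fun s => ¬ P 0 s) (P 1), ← add_assoc]
  congr 1
  · congr 1 <;> exact Finset.sum_congr rfl fun _ _ => by ring
  · exact Finset.sum_congr rfl fun _ _ => by ring

lemma lowDeg_card_le (ι : Type*) [Fintype ι] [DecidableEq ι] (q : ℕ) (hq : 1 ≤ q) (x : ℝ)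
    (hx0 : 0 < x) (hx1 : x < 1) :
    ((lowDeg ι (q - 1)).card : ℝ) ≤
      ((1 - x ^ q) / (x ^ (((q : ℝ) - 1) / 3) * (1 - x))) ^ Fintype.card ι := by
  have hp : 0 < x ^ (((q : ℝ) - 1) / 3) := Real.rpow_pos_of_pos hx0 _
  have h1 : (1 - x ^ q) / (1 - x) = ∑ j ∈ Finset.range (q - 1 + 1), x ^ j := by
    rw [Nat.sub_add_cancel hq, geom_sum_eq hx1.ne, ← neg_div_neg_eq]
    congr 1 <;> ring
  rw [mul_comm, ← div_div, div_pow, h1, le_div_iff₀ (by positivity)]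
  have h2 : (∑ j ∈ Finset.range (q - 1 + 1), x ^ j) ^ Fintype.card ι =
      ∑ α ∈ Fintype.piFinset fun _ : ι => Finset.range (q - 1 + 1), ∏ i, x ^ α i := by
    rw [← Finset.prod_univ_sum]
    simp
  rw [h2]
  calc ((lowDeg ι (q - 1)).card : ℝ) * (x ^ (((q : ℝ) - 1) / 3)) ^ Fintype.card ι
      = ∑ α ∈ lowDeg ι (q - 1), (x ^ (((q : ℝ) - 1) / 3)) ^ Fintype.card ι := by simp
    _ ≤ ∑ α ∈ lowDeg ι (q - 1), ∏ i, x ^ α i := by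
        refine Finset.sum_le_sum fun α hα => ?_
        have h3 := (Finset.mem_filter.mp hα).2
        rw [Finset.prod_pow_eq_pow_sum, ← Real.rpow_natCast, ← Real.rpow_mul hx0.le,
          ← Real.rpow_natCast]
        apply Real.rpow_le_rpow_of_exponent_ge hx0 hx1.le
        have h4 : (3 : ℝ) * ((∑ i, α i : ℕ) : ℝ) ≤ ((q : ℝ) - 1) * Fintype.card ι := by
          have h5 : ((3 * ∑ i, α i : ℕ) : ℝ) ≤ (((q - 1) * Fintype.card ι : ℕ) : ℝ) :=
            Nat.cast_le.mpr h3
          rw [Nat.cast_mul, Nat.cast_mul, Nat.cast_sub hq] at h5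
          simpa using h5
        linarith
    _ ≤ _ := Finset.sum_le_sum_of_subset_of_nonneg (Finset.filter_subset _ _)
        fun α _ _ => Finset.prod_nonneg fun i _ => by positivity


theorem stmt12 {q n : ℕ} (hq : Odd q) (hpp : IsPrimePow q) (hn : 0 < n)
    (F : Type*) [Field F] [Fintype F] (hcard : Fintype.card F = q)
    (a : F) (ha : a ^ 2 = 3) (ha0 : a ≠ 0) (b : F) (hb : b = 2⁻¹)
    (A : Finset ((Fin n → F) × (Fin n → F)))
    (hA : ∀ x d : (Fin n → F) × (Fin n → F), d ≠ 0 →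
      ¬(x ∈ A ∧ x + d ∈ A ∧
        x + (b • d.1 - (a * b) • d.2, (a * b) • d.1 + b • d.2) ∈ A)) :
    (A.card : ℝ) ≤ 3 *
      (sInf ((fun x : ℝ => (1 - x ^ q) / (x ^ (((q : ℝ) - 1) / 3) * (1 - x))) ''
        Set.Ioo (0 : ℝ) 1)) ^ (2 * n) := by

  classical
  have h2 : (2 : F) ≠ 0 := by
    intro h
    have h3 : ringChar F = 2 := by
      have := ringChar.dvd (R := F) (x := 2) (by exact_mod_cast h)
      rcases (Nat.dvd_prime Nat.prime_two).mp this with h' | h'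
      · exact absurd h' (CharP.ringChar_ne_one)
      · exact h'
    have h4 := FiniteField.even_card_of_char_two h3
    rw [hcard] at h4
    rcases hq with ⟨k, hk⟩
    omega
  have hb2 : 2 * b = 1 := by rw [hb]; exact mul_inv_cancel₀ h2
  have hq1 : 1 ≤ q := by rcases hq with ⟨k, hk⟩; omega
  -- z - x = M (y - x)
  let X : A → (Fin n ⊕ Fin n) → F := fun p => Sum.elim
    (fun i => -(1 - b) * p.1.1 i - a * b * p.1.2 i)
    (fun i => a * b * p.1.1 i - (1 - b) * p.1.2 i)
  let Y : A → (Fin n ⊕ Fin n) → F := fun p => Sum.elim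
    (fun i => - (b * p.1.1 i - a * b * p.1.2 i))
    (fun i => - (a * b * p.1.1 i + b * p.1.2 i))
  let Z : A → (Fin n ⊕ Fin n) → F := fun p => Sum.elim (fun i => p.1.1 i) (fun i => p.1.2 i)
  have hkey : ∀ x y z, (∀ i, X x i + Y y i + Z z i = 0) ↔ (x = y ∧ y = z) := by
    rintro ⟨⟨x₁, x₂⟩, hx⟩ ⟨⟨y₁, y₂⟩, hy⟩ ⟨⟨z₁, z₂⟩, hz⟩
    constructor
    · intro h
      have e1 : z₁ = x₁ + (b • (y₁ - x₁) - (a * b) • (y₂ - x₂)) := by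
        ext i
        have := h (Sum.inl i)
        simp only [X, Y, Z, Sum.elim_inl] at this
        simp only [Pi.add_apply, Pi.sub_apply, Pi.smul_apply, smul_eq_mul]
        linear_combination this
      have e2 : z₂ = x₂ + ((a * b) • (y₁ - x₁) + b • (y₂ - x₂)) := by
        ext i
        have := h (Sum.inr i)
        simp only [X, Y, Z, Sum.elim_inr] at this
        simp only [Pi.add_apply, Pi.sub_apply, Pi.smul_apply, smul_eq_mul]
        linear_combination this
      have hd : ((y₁ - x₁, y₂ - x₂) : (Fin n → F) × (Fin n → F)) = 0 := by
        by_contra hne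
        refine hA (x₁, x₂) _ hne ⟨hx, ?_, ?_⟩
        · simpa using hy
        · simpa [← e1, ← e2] using hz
      rw [Prod.mk_eq_zero] at hd
      rw [hd.1, hd.2] at e1 e2
      have d1 := sub_eq_zero.mp hd.1
      have d2 := sub_eq_zero.mp hd.2
      simp at e1 e2
      simp [d1, d2, e1, e2]
    · rintro ⟨h1, h2⟩ i
      rw [← h2, ← h1]
      rcases i with i | i <;> simp only [X, Y, Z, Sum.elim_inl, Sum.elim_inr] <;>
        linear_combination
  have hc := card_bound X Y Z hkey
  rw [Fintype.card_coe, hcard] at hc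
  have hcR : (A.card : ℝ) ≤ 3 * ((lowDeg (Fin n ⊕ Fin n) (q - 1)).card : ℝ) := by
    exact_mod_cast hc
  refine hcR.trans (mul_le_mul_of_nonneg_left ?_ (by norm_num))
  set L : ℝ := ((lowDeg (Fin n ⊕ Fin n) (q - 1)).card : ℝ) with hL
  have hL0 : 0 ≤ L := Nat.cast_nonneg _
  have hN : 2 * n ≠ 0 := by omega
  have hroot : (L ^ (((2 * n : ℕ) : ℝ)⁻¹)) ^ (2 * n) = L := Real.rpow_inv_natCast_pow hL0 hN
  rw [← hroot]
  refine pow_le_pow_left₀ (Real.rpow_nonneg hL0 _) ?_ _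
  refine le_csInf ((Set.nonempty_Ioo.mpr one_pos).image _) ?_
  rintro _ ⟨x, ⟨hx0, hx1⟩, rfl⟩
  have hb1 := lowDeg_card_le (Fin n ⊕ Fin n) q hq1 x hx0 hx1
  have hcc : Fintype.card (Fin n ⊕ Fin n) = 2 * n := by simp; ring
  rw [hcc, ← hL, ← hroot] at hb1
  refine le_of_pow_le_pow_left₀ hN ?_ hb1
  have : x ^ q ≤ 1 := pow_le_one₀ hx0.le hx1.le
  have hp : 0 < x ^ (((q : ℝ) - 1) / 3) := Real.rpow_pos_of_pos hx0 _
  exact div_nonneg (by linarith) (mul_nonneg hp.le (by linarith))
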